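/- arXiv:1309.6283 — 2 statements merged into one kernel-verified Lean document; each statement's English description precedes it below -/
import Mathlib

section
/- (i) If λ is a Borel probability measure on the compact space Γ(Ω,φ) that is invariant under the continuous map P ↦ V∘P, and T : X* → X* is represented by λ, then V∘T = T; in particular, if moreover T ∈ G(Ω,φ), then T belongs to the kernel L. (ii) Conversely, for every Q ∈ L there exists a Borel probability measure λ on Γ(Ω,φ), invariant under P ↦ V∘P, that represents Q. -/
open MeasureTheory Filter Topology

/-- The pairing `⟨f, μ⟩ = ∫ f dμ` of a function with a finite signed Borel measure,
defined via the Jordan decomposition of the signed measure. -/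
noncomputable def spair {Ω : Type*} [MeasurableSpace Ω] (f : Ω → ℝ) (μ : SignedMeasure Ω) : ℝ :=
  (∫ ω, f ω ∂μ.toJordanDecomposition.posPart) - (∫ ω, f ω ∂μ.toJordanDecomposition.negPart)

/-- The weak* topology on the space `X*` of finite signed Borel measures, i.e. the topology
of convergence of the pairings with all continuous functions `x ∈ C(Ω, ℝ)`. With this topology
on the codomain, the product topology on `SignedMeasure Ω → SignedMeasure Ω` is precisely the
weak* operator topology (pointwise convergence with `X*` in its weak* topology). -/
noncomputable instance weakStarTopology {Ω : Type*} [TopologicalSpace Ω] [MeasurableSpace Ω] :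
    TopologicalSpace (SignedMeasure Ω) :=
  TopologicalSpace.induced (fun μ => fun x : C(Ω, ℝ) => spair (⇑x) μ) inferInstance

/-- The operator `V : X* → X*`, pushforward by `φ`: `(Vμ)(e) = μ(φ⁻¹ e)`. -/
noncomputable def Vop {Ω : Type*} [MeasurableSpace Ω] (φ : Ω → Ω) :
    SignedMeasure Ω → SignedMeasure Ω :=
  fun μ => μ.map φ

/-- The Dirac measure at `ω`, as a signed measure. -/
noncomputable def diracSM {Ω : Type*} [MeasurableSpace Ω] (ω : Ω) : SignedMeasure Ω :=
  (Measure.dirac ω).toSignedMeasure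

/-- `Γ(Ω,φ)`: the closure of `{Vⁿ : n ≥ 0}` in the weak* operator topology. -/
def GammaSG {Ω : Type*} [TopologicalSpace Ω] [MeasurableSpace Ω] (φ : Ω → Ω) :
    Set (SignedMeasure Ω → SignedMeasure Ω) :=
  closure (Set.range fun n : ℕ => (Vop φ)^[n])

/-- `G(Ω,φ)`: the closure of the convex hull of `{Vⁿ : n ≥ 0}` in the weak* operator topology. -/
def GSG {Ω : Type*} [TopologicalSpace Ω] [MeasurableSpace Ω] (φ : Ω → Ω) :
    Set (SignedMeasure Ω → SignedMeasure Ω) :=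
  closure (convexHull ℝ (Set.range fun n : ℕ => (Vop φ)^[n]))

/-- The kernel `L = {Q ∈ G(Ω,φ) : V ∘ Q = Q}` of the semigroup `G(Ω,φ)`. -/
def Lker {Ω : Type*} [TopologicalSpace Ω] [MeasurableSpace Ω] (φ : Ω → Ω) :
    Set (SignedMeasure Ω → SignedMeasure Ω) :=
  {Q ∈ GSG φ | Vop φ ∘ Q = Q}

/-- The Ellis enveloping semigroup `E(Ω,φ)`: the closure of the iterates `{φⁿ : n ≥ 0}`
in the product topology (pointwise convergence) on `Ω → Ω`. -/
def EllisE {Ω : Type*} [TopologicalSpace Ω] (φ : Ω → Ω) : Set (Ω → Ω) :=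
  closure (Set.range fun n : ℕ => φ^[n])

/-- `E_b(Ω,φ)`: the smallest set of self-maps of `Ω` containing the iterates `{φⁿ : n ≥ 0}`
and sequentially closed under pointwise convergence. -/
inductive Eb {Ω : Type*} [TopologicalSpace Ω] (φ : Ω → Ω) : (Ω → Ω) → Prop
  | iterate (n : ℕ) : Eb φ φ^[n]
  | lim (p : ℕ → Ω → Ω) (q : Ω → Ω) (hp : ∀ k, Eb φ (p k))
      (hq : ∀ ω, Tendsto (fun k => p k ω) atTop (𝓝 (q ω))) : Eb φ q

/-- `E₁(Ω,φ)`: the set of pointwise limits of sequences of iterates `φ^{n_k}`. -/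
def E1SG {Ω : Type*} [TopologicalSpace Ω] (φ : Ω → Ω) : Set (Ω → Ω) :=
  {p | ∃ n : ℕ → ℕ, ∀ ω, Tendsto (fun k => φ^[n k] ω) atTop (𝓝 (p ω))}

/-- An operator `P ∈ Γ(Ω,φ)` with `p = πP` is regular if `p` is Borel measurable and
`(Pμ)(e) = μ(p⁻¹ e)` for every Borel probability measure `μ` and Borel set `e`. -/
def RegularOperator {Ω : Type*} [TopologicalSpace Ω] [MeasurableSpace Ω]
    (P : SignedMeasure Ω → SignedMeasure Ω) (p : Ω → Ω) : Prop :=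
  Measurable p ∧ ∀ (μ : Measure Ω) [IsProbabilityMeasure μ],
    ∀ e : Set Ω, MeasurableSet e → P μ.toSignedMeasure e = (μ (p ⁻¹' e)).toReal

/-- A minimal set of the semicascade `(Ω,φ)`: a nonempty closed `φ`-invariant set containing
no proper nonempty closed `φ`-invariant subset. -/
def IsMinimalSet {Ω : Type*} [TopologicalSpace Ω] (φ : Ω → Ω) (m : Set Ω) : Prop :=
  m.Nonempty ∧ IsClosed m ∧ Set.MapsTo φ m m ∧
    ∀ m' ⊆ m, m'.Nonempty → IsClosed m' → Set.MapsTo φ m' m' → m' = m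

/-- The orbit closure of a point `ω`: the closure of the trajectory `{φⁿ ω : n ≥ 0}`. -/
def orbitClosure {Ω : Type*} [TopologicalSpace Ω] (φ : Ω → Ω) (ω : Ω) : Set Ω :=
  closure (Set.range fun n : ℕ => φ^[n] ω)

/-- A `φ`-ergodic measure: a `φ`-invariant Borel probability measure `μ` such that
`μ(e) ∈ {0,1}` for every Borel set `e` with `φ⁻¹ e = e`. -/
def IsErgodicMeasure {Ω : Type*} [MeasurableSpace Ω] (φ : Ω → Ω) (μ : Measure Ω) : Prop :=
  IsProbabilityMeasure μ ∧ (∀ e : Set Ω, MeasurableSet e → μ (φ ⁻¹' e) = μ e) ∧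
    (∀ e : Set Ω, MeasurableSet e → φ ⁻¹' e = e → μ e = 0 ∨ μ e = 1)

/-- The support of a Borel measure: the smallest closed set of full measure
(the intersection of all closed sets of full measure). -/
def msupp {Ω : Type*} [TopologicalSpace Ω] [MeasurableSpace Ω] (μ : Measure Ω) : Set Ω :=
  ⋂₀ {s : Set Ω | IsClosed s ∧ μ sᶜ = 0}

/-- The semicascade `(Ω,φ)` is tame: for every continuous `x` and every strictly increasing
sequence `n(1) < n(2) < ⋯`, the infimum over finitely supported real coefficients `a` with
`Σ|aₖ| = 1` of the sup-norms `‖Σₖ aₖ · (x ∘ φ^{n(k)})‖` is `0`. -/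
def Tame {Ω : Type*} [TopologicalSpace Ω] [CompactSpace Ω] (φ : Ω → Ω)
    (hφ : Continuous φ) : Prop :=
  ∀ (x : C(Ω, ℝ)) (n : ℕ → ℕ), StrictMono n →
    sInf {r : ℝ | ∃ a : ℕ →₀ ℝ, (∑ k ∈ a.support, |a k|) = 1 ∧
      r = ‖∑ k ∈ a.support, a k • x.comp ⟨φ^[n k], hφ.iterate (n k)⟩‖} = 0

/-- Points `a, b` are proximal: `inf_{n ≥ 0} d(φⁿ a, φⁿ b) = 0`. -/
def Proximal {Ω : Type*} [PseudoMetricSpace Ω] (φ : Ω → Ω) (a b : Ω) : Prop :=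
  (⨅ n : ℕ, dist (φ^[n] a) (φ^[n] b)) = 0

/-- The Borel σ-algebra on the space of operators `X* → X*` with the weak* operator topology. -/
noncomputable instance funBorel {Ω : Type*} [TopologicalSpace Ω] [MeasurableSpace Ω] :
    MeasurableSpace (SignedMeasure Ω → SignedMeasure Ω) :=
  borel _

/-- A Borel probability measure `λ` on operators represents `T : X* → X*` if
`⟨x, Tμ⟩ = ∫_Γ ⟨x, Pμ⟩ dλ(P)` for all `x ∈ C(Ω,ℝ)` and `μ ∈ X*`. -/
def Represents {Ω : Type*} [TopologicalSpace Ω] [MeasurableSpace Ω]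
    (lam : Measure (SignedMeasure Ω → SignedMeasure Ω))
    (T : SignedMeasure Ω → SignedMeasure Ω) : Prop :=
  ∀ (x : C(Ω, ℝ)) (μ : SignedMeasure Ω),
    spair (⇑x) (T μ) = ∫ P, spair (⇑x) (P μ) ∂lam


section Pairing

set_option linter.unusedSectionVars false

variable {Ω : Type*} [TopologicalSpace Ω] [CompactSpace Ω] [TopologicalSpace.MetrizableSpace Ω]
  [MeasurableSpace Ω] [BorelSpace Ω]

lemma integrable_cm (x : C(Ω, ℝ)) (μ : Measure Ω) [IsFiniteMeasure μ] : Integrable (⇑x) μ := by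
  exact (BoundedContinuousFunction.mkOfCompact x).integrable μ

lemma spair_sub (x : C(Ω, ℝ)) (p n : Measure Ω) [IsFiniteMeasure p] [IsFiniteMeasure n] :
    spair (⇑x) (p.toSignedMeasure - n.toSignedMeasure) = ∫ ω, x ω ∂p - ∫ ω, x ω ∂n := by
  set s := p.toSignedMeasure - n.toSignedMeasure with hs
  have h := SignedMeasure.toSignedMeasure_toJordanDecomposition s
  rw [JordanDecomposition.toSignedMeasure] at h
  set j := s.toJordanDecomposition with hj
  have h2 : (j.posPart + n).toSignedMeasure = (p + j.negPart).toSignedMeasure := by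
    rw [Measure.toSignedMeasure_add, Measure.toSignedMeasure_add]
    rw [hs, sub_eq_sub_iff_add_eq_add] at h
    exact h
  have h3 : j.posPart + n = p + j.negPart := Measure.toSignedMeasure_eq_toSignedMeasure_iff.1 h2
  have h4 : ∫ ω, x ω ∂(j.posPart + n) = ∫ ω, x ω ∂(p + j.negPart) := by rw [h3]
  rw [integral_add_measure (integrable_cm x _) (integrable_cm x _),
    integral_add_measure (integrable_cm x _) (integrable_cm x _)] at h4
  rw [spair, ← hj]
  linarith

lemma sm_eq {Ω : Type*} [MeasurableSpace Ω] (μ : SignedMeasure Ω) :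
    μ = μ.toJordanDecomposition.posPart.toSignedMeasure
      - μ.toJordanDecomposition.negPart.toSignedMeasure :=
  (SignedMeasure.toSignedMeasure_toJordanDecomposition μ).symm

lemma spair_add (x : C(Ω, ℝ)) (μ ν : SignedMeasure Ω) :
    spair (⇑x) (μ + ν) = spair (⇑x) μ + spair (⇑x) ν := by
  have : μ + ν = (μ.toJordanDecomposition.posPart + ν.toJordanDecomposition.posPart).toSignedMeasure
      - (μ.toJordanDecomposition.negPart + ν.toJordanDecomposition.negPart).toSignedMeasure := by
    rw [Measure.toSignedMeasure_add, Measure.toSignedMeasure_add]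
    conv_lhs => rw [sm_eq μ, sm_eq ν]
    abel
  rw [this, spair_sub, integral_add_measure (integrable_cm x _) (integrable_cm x _),
    integral_add_measure (integrable_cm x _) (integrable_cm x _), spair, spair]
  ring

lemma spair_smul (x : C(Ω, ℝ)) (μ : SignedMeasure Ω) (c : ℝ) (hc : 0 ≤ c) :
    spair (⇑x) (c • μ) = c * spair (⇑x) μ := by
  lift c to NNReal using hc
  have : (c : ℝ) • μ = (c • μ.toJordanDecomposition.posPart).toSignedMeasure
      - (c • μ.toJordanDecomposition.negPart).toSignedMeasure := by
    rw [Measure.toSignedMeasure_smul, Measure.toSignedMeasure_smul]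
    conv_lhs => rw [sm_eq μ]
    rw [smul_sub]; rfl
  rw [this, spair_sub, integral_smul_nnreal_measure, integral_smul_nnreal_measure, spair]
  simp only [NNReal.smul_def, smul_eq_mul]
  ring

lemma spair_ext (μ ν : SignedMeasure Ω) (h : ∀ x : C(Ω, ℝ), spair (⇑x) μ = spair (⇑x) ν) :
    μ = ν := by
  have h3 : μ.toJordanDecomposition.posPart + ν.toJordanDecomposition.negPart
      = ν.toJordanDecomposition.posPart + μ.toJordanDecomposition.negPart := by
    apply ext_of_forall_integral_eq_of_IsFiniteMeasure
    intro f
    have := h f.toContinuousMap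
    rw [spair, spair] at this
    have e : ∀ m : Measure Ω, ∀ [IsFiniteMeasure m], Integrable f m := fun m _ => f.integrable m
    rw [integral_add_measure (e _) (e _), integral_add_measure (e _) (e _)]
    simp only [BoundedContinuousFunction.coe_toContinuousMap] at this
    linarith
  have h2 := Measure.toSignedMeasure_congr h3
  rw [Measure.toSignedMeasure_add, Measure.toSignedMeasure_add] at h2
  rw [sm_eq μ, sm_eq ν, sub_eq_sub_iff_add_eq_add]
  exact h2

lemma Vop_sub (φ : Ω → Ω) (hφ : Continuous φ) (p n : Measure Ω) [IsFiniteMeasure p]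
    [IsFiniteMeasure n] : Vop φ (p.toSignedMeasure - n.toSignedMeasure)
      = (p.map φ).toSignedMeasure - (n.map φ).toSignedMeasure := by
  ext i hi
  rw [Vop, VectorMeasure.map_apply _ hφ.measurable hi,
    Measure.toSignedMeasure_sub_apply (hφ.measurable hi), Measure.toSignedMeasure_sub_apply hi,
    map_measureReal_apply hφ.measurable hi, map_measureReal_apply hφ.measurable hi]

lemma spair_Vop (φ : Ω → Ω) (hφ : Continuous φ) (x : C(Ω, ℝ)) (μ : SignedMeasure Ω) :
    spair (⇑x) (Vop φ μ) = spair (⇑(x.comp ⟨φ, hφ⟩)) μ := by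
  conv_lhs => rw [sm_eq μ]
  rw [Vop_sub φ hφ, spair_sub, spair,
    integral_map hφ.measurable.aemeasurable x.continuous.aestronglyMeasurable,
    integral_map hφ.measurable.aemeasurable x.continuous.aestronglyMeasurable]
  rfl

lemma continuous_spair (x : C(Ω, ℝ)) : Continuous (fun μ : SignedMeasure Ω => spair (⇑x) μ) :=
  (continuous_apply x).comp (continuous_induced_dom
    (f := fun μ : SignedMeasure Ω => fun x : C(Ω, ℝ) => spair (⇑x) μ))

lemma continuous_to_sm {Y : Type*} [TopologicalSpace Y] (f : Y → SignedMeasure Ω)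
    (h : ∀ x : C(Ω, ℝ), Continuous (fun y => spair (⇑x) (f y))) : Continuous f :=
  continuous_induced_rng.2 (continuous_pi h)

instance t2_sm : T2Space (SignedMeasure Ω) :=
  T2Space.of_injective_continuous (f := fun μ : SignedMeasure Ω => fun x : C(Ω, ℝ) => spair (⇑x) μ)
    (fun μ ν h => spair_ext μ ν (fun x => congrFun h x)) continuous_induced_dom

lemma continuous_Vop (φ : Ω → Ω) (hφ : Continuous φ) : Continuous (Vop φ) := by
  apply continuous_to_sm
  intro x
  simp_rw [spair_Vop φ hφ]
  exact continuous_spair _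

/-- Differences of positive measures with prescribed masses. -/
def massSet (Ω : Type*) [MeasurableSpace Ω] (a b : NNReal) : Set (SignedMeasure Ω) :=
  (fun q : FiniteMeasure Ω × FiniteMeasure Ω =>
    (q.1 : Measure Ω).toSignedMeasure - (q.2 : Measure Ω).toSignedMeasure) ''
    ({μ | μ.mass = a} ×ˢ {μ | μ.mass = b})

lemma isCompact_massSet (a b : NNReal) : IsCompact (massSet Ω a b) := by
  apply IsCompact.image
  · exact (isCompact_setOfPred_finiteMeasure_eq_of_compactSpace Ω a).prod
      (isCompact_setOfPred_finiteMeasure_eq_of_compactSpace Ω b)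
  · apply continuous_to_sm
    intro x
    simp_rw [spair_sub]
    exact ((FiniteMeasure.continuous_integral_continuousMap x).comp continuous_fst).sub
      ((FiniteMeasure.continuous_integral_continuousMap x).comp continuous_snd)

lemma Vop_massSet (φ : Ω → Ω) (hφ : Continuous φ) (a b : NNReal) (μ : SignedMeasure Ω)
    (h : μ ∈ massSet Ω a b) : Vop φ μ ∈ massSet Ω a b := by
  obtain ⟨⟨p, n⟩, ⟨hp, hn⟩, rfl⟩ := h
  refine ⟨⟨p.map φ, n.map φ⟩, ⟨?_, ?_⟩, ?_⟩
  · simp only [Set.mem_ofPred_eq] at hp ⊢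
    rw [← hp]; simp [FiniteMeasure.mass, FiniteMeasure.map_apply_of_aemeasurable _ hφ.measurable.aemeasurable MeasurableSet.univ]
  · simp only [Set.mem_ofPred_eq] at hn ⊢
    rw [← hn]; simp [FiniteMeasure.mass, FiniteMeasure.map_apply_of_aemeasurable _ hφ.measurable.aemeasurable MeasurableSet.univ]
  · exact (Vop_sub φ hφ _ _).symm

lemma isCompact_GammaSG (φ : Ω → Ω) (hφ : Continuous φ) : IsCompact (GammaSG φ) := by
  have hm : ∀ μ : SignedMeasure Ω, ∃ a b : NNReal, μ ∈ massSet Ω a b := by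
    intro μ
    exact ⟨_, _, ⟨⟨⟨μ.toJordanDecomposition.posPart, inferInstance⟩,
      ⟨μ.toJordanDecomposition.negPart, inferInstance⟩⟩, ⟨rfl, rfl⟩, (sm_eq μ).symm⟩⟩
  choose a b hab using hm
  have hc : IsCompact (Set.pi Set.univ (fun μ : SignedMeasure Ω => massSet Ω (a μ) (b μ))) :=
    isCompact_univ_pi (fun μ => isCompact_massSet _ _)
  refine hc.of_isClosed_subset isClosed_closure (closure_minimal ?_ hc.isClosed)
  rintro _ ⟨n, rfl⟩ μ -
  show (Vop φ)^[n] μ ∈ massSet Ω (a μ) (b μ)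
  induction n with
  | zero => exact hab μ
  | succ k ih => rw [Function.iterate_succ_apply']; exact Vop_massSet φ hφ _ _ _ ih

end Pairing

section States

variable {K : Type*} [TopologicalSpace K] [CompactSpace K]

/-- Positive normalized linear functionals on `C(K, ℝ)`. -/
def IsState (L : C(K, ℝ) →ₗ[ℝ] ℝ) : Prop := (∀ f, 0 ≤ f → 0 ≤ L f) ∧ L 1 = 1

lemma IsState.bound {L : C(K, ℝ) →ₗ[ℝ] ℝ} (h : IsState L) (f : C(K, ℝ)) : |L f| ≤ ‖f‖ := by
  have h1 : 0 ≤ L (‖f‖ • (1 : C(K, ℝ)) - f) := h.1 _ (by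
    intro p
    have := f.norm_coe_le_norm p
    rw [Real.norm_eq_abs] at this
    simpa using (abs_le.1 this).2)
  have h2 : 0 ≤ L (‖f‖ • (1 : C(K, ℝ)) + f) := h.1 _ (by
    intro p
    have := f.norm_coe_le_norm p
    rw [Real.norm_eq_abs] at this
    have := (abs_le.1 this).1
    simp
    linarith)
  rw [map_sub, map_smul, h.2, smul_eq_mul] at h1
  rw [map_add, map_smul, h.2, smul_eq_mul] at h2
  rw [abs_le]
  constructor <;> linarith

lemma exists_state_lim {ι : Type*} (U : Ultrafilter ι) (L : ι → C(K, ℝ) →ₗ[ℝ] ℝ)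
    (h : ∀ i, IsState (L i)) : ∃ M : C(K, ℝ) →ₗ[ℝ] ℝ, IsState M ∧
      ∀ f, Tendsto (fun i => L i f) U (𝓝 (M f)) := by
  have hex : ∀ f, ∃ r : ℝ, Tendsto (fun i => L i f) U (𝓝 r) := by
    intro f
    have hc : IsCompact (Set.Icc (-‖f‖) ‖f‖) := isCompact_Icc
    obtain ⟨r, -, hr⟩ := hc.ultrafilter_le_nhds (U.map (fun i => L i f)) (by
      rw [le_principal_iff]
      exact Ultrafilter.mem_map.2
        (Filter.univ_mem' (fun i => abs_le.1 ((h i).bound f))))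
    exact ⟨r, hr⟩
  choose M hM using hex
  refine ⟨⟨⟨M, fun f g => ?_⟩, fun c f => ?_⟩, ⟨fun f hf => ?_, ?_⟩, hM⟩
  · refine tendsto_nhds_unique (hM (f + g)) ?_
    simp_rw [map_add]
    exact (hM f).add (hM g)
  · refine tendsto_nhds_unique (hM (c • f)) ?_
    simp_rw [map_smul]
    exact (hM f).const_smul c
  · exact ge_of_tendsto' (hM f) (fun i => (h i).1 f hf)
  · refine tendsto_nhds_unique (hM 1) ?_
    simp_rw [(h _).2]
    exact tendsto_const_nhds

/-- Composition with a continuous self-map, as a linear map. -/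
def compLin (s : C(K, K)) : C(K, ℝ) →ₗ[ℝ] C(K, ℝ) where
  toFun f := f.comp s
  map_add' _ _ := rfl
  map_smul' _ _ := rfl

/-- The iterated transports of a functional. -/
def iterL (s : C(K, K)) (L : C(K, ℝ) →ₗ[ℝ] ℝ) : ℕ → C(K, ℝ) →ₗ[ℝ] ℝ
  | 0 => L
  | k + 1 => (iterL s L k).comp (compLin s)

lemma exists_invariant_state (s : C(K, K)) (L : C(K, ℝ) →ₗ[ℝ] ℝ) (hL : IsState L) :
    ∃ M : C(K, ℝ) →ₗ[ℝ] ℝ, IsState M ∧ (∀ f, M (f.comp s) = M f) ∧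
      ∀ f, (∀ k, iterL s L k f = L f) → M f = L f := by
  have hst : ∀ k, IsState (iterL s L k) := by
    intro k
    induction k with
    | zero => exact hL
    | succ k ih => exact ⟨fun f hf => ih.1 _ (fun p => hf (s p)), ih.2⟩
  let A : ℕ → C(K, ℝ) →ₗ[ℝ] ℝ := fun n =>
    ((n : ℝ) + 1)⁻¹ • ∑ k ∈ Finset.range (n + 1), iterL s L k
  have hA : ∀ n f, A n f = ((n : ℝ) + 1)⁻¹ * ∑ k ∈ Finset.range (n + 1), iterL s L k f := by
    intro n f
    simp [A]
  have hAst : ∀ n, IsState (A n) := by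
    intro n
    refine ⟨fun f hf => ?_, ?_⟩
    · rw [hA]
      exact mul_nonneg (by positivity) (Finset.sum_nonneg fun k _ => (hst k).1 f hf)
    · rw [hA]
      simp_rw [(hst _).2]
      have : (n : ℝ) + 1 ≠ 0 := by positivity
      simp [this]
  let U : Ultrafilter ℕ := Ultrafilter.of atTop
  have hU : (U : Filter ℕ) ≤ atTop := Ultrafilter.of_le _
  obtain ⟨M, hM, hlim⟩ := exists_state_lim U A hAst
  refine ⟨M, hM, fun f => ?_, fun f hf => ?_⟩
  · have h1 : Tendsto (fun n => A n (f.comp s) - A n f) U (𝓝 (M (f.comp s) - M f)) :=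
      (hlim _).sub (hlim _)
    have h2 : Tendsto (fun n => A n (f.comp s) - A n f) atTop (𝓝 0) := by
      have hb : Tendsto (fun n : ℕ => (1 / ((n : ℝ) + 1)) * (2 * ‖f‖)) atTop (𝓝 0) := by
        simpa using (tendsto_one_div_add_atTop_nhds_zero_nat (𝕜 := ℝ)).mul_const (2 * ‖f‖)
      refine squeeze_zero_norm (fun n => ?_) hb
      have e : A n (f.comp s) - A n f = ((n : ℝ) + 1)⁻¹ * (iterL s L (n + 1) f - iterL s L 0 f) := by
        rw [hA, hA, ← mul_sub, ← Finset.sum_sub_distrib,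
          ← Finset.sum_range_sub (fun k => iterL s L k f)]
        rfl
      rw [e, norm_mul, norm_inv, one_div, Real.norm_of_nonneg (by positivity : (0:ℝ) ≤ (n:ℝ) + 1)]
      gcongr
      have i1 := (hst (n + 1)).bound f
      have i2 := (hst 0).bound f
      calc ‖iterL s L (n + 1) f - iterL s L 0 f‖ ≤ ‖iterL s L (n + 1) f‖ + ‖iterL s L 0 f‖ :=
            norm_sub_le _ _
        _ ≤ 2 * ‖f‖ := by simp only [Real.norm_eq_abs] at *; linarith
    exact sub_eq_zero.1 (tendsto_nhds_unique h1 (h2.mono_left hU))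
  · refine tendsto_nhds_unique (hlim f) ?_
    have : ∀ n, A n f = L f := by
      intro n
      rw [hA]
      simp_rw [hf]
      have : (n : ℝ) + 1 ≠ 0 := by positivity
      simp [this]
    simp_rw [this]
    exact tendsto_const_nhds

lemma exists_state_measure [T2Space K] [MeasurableSpace K] [BorelSpace K]
    (L : C(K, ℝ) →ₗ[ℝ] ℝ) (hL : IsState L) :
    ∃ m : Measure K, IsProbabilityMeasure m ∧ m.Regular ∧ ∀ f : C(K, ℝ), ∫ p, f p ∂m = L f := by
  let e : CompactlySupportedContinuousMap K ℝ →ₗ[ℝ] C(K, ℝ) :=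
    { toFun := fun f => f.toContinuousMap
      map_add' := fun _ _ => rfl
      map_smul' := fun _ _ => rfl }
  let P := PositiveLinearMap.mk₀ (L.comp e) (fun f hf => hL.1 _ hf)
  have hi : ∀ f : C(K, ℝ), ∫ p, f p ∂(RealRMK.rieszMeasure P) = L f := by
    intro f
    exact RealRMK.integral_rieszMeasure P ⟨f, HasCompactSupport.of_compactSpace _⟩
  refine ⟨RealRMK.rieszMeasure P, ⟨?_⟩, inferInstance, hi⟩
  have h1 := hi 1
  rw [hL.2] at h1
  simp only [ContinuousMap.one_apply, integral_const, smul_eq_mul, mul_one] at h1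
  rw [measureReal_def] at h1
  rwa [ENNReal.toReal_eq_one_iff] at h1

lemma exists_invariant_measure [T2Space K] [MeasurableSpace K] [BorelSpace K] (s : C(K, K))
    (L : C(K, ℝ) →ₗ[ℝ] ℝ) (hL : IsState L) :
    ∃ m : Measure K, IsProbabilityMeasure m ∧ m.map s = m ∧
      ∀ f : C(K, ℝ), (∀ k, iterL s L k f = L f) → ∫ p, f p ∂m = L f := by
  obtain ⟨M, hM, hinv, hrep⟩ := exists_invariant_state s L hL
  obtain ⟨m, hm, hreg, hi⟩ := exists_state_measure M hM
  refine ⟨m, hm, ?_, fun f hf => by rw [hi, hrep f hf]⟩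
  have : (m.map s).InnerRegularCompactLTTop :=
    Measure.InnerRegularCompactLTTop.map_of_continuous s.continuous
  apply Measure.ext_of_integral_eq_on_compactlySupported
  intro f
  rw [integral_map (f := ⇑f) s.continuous.measurable.aemeasurable
    f.continuous.aestronglyMeasurable]
  have h1 := hi (f.toContinuousMap.comp s)
  have h2 := hi f.toContinuousMap
  rw [hinv, ← h2] at h1
  exact h1

end States

section Main

variable {Ω : Type*} [TopologicalSpace Ω] [CompactSpace Ω] [TopologicalSpace.MetrizableSpace Ω]
  [MeasurableSpace Ω] [BorelSpace Ω]

set_option linter.unusedSectionVars false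

instance funBorelSpace : BorelSpace (SignedMeasure Ω → SignedMeasure Ω) := ⟨rfl⟩

lemma continuous_ev (x : C(Ω, ℝ)) (μ : SignedMeasure Ω) :
    Continuous (fun P : SignedMeasure Ω → SignedMeasure Ω => spair (⇑x) (P μ)) :=
  (continuous_spair x).comp (continuous_apply μ)

lemma continuous_comp_Vop (φ : Ω → Ω) (hφ : Continuous φ) :
    Continuous (fun T : SignedMeasure Ω → SignedMeasure Ω => Vop φ ∘ T) :=
  continuous_pi fun μ => (continuous_Vop φ hφ).comp (continuous_apply μ)

/-- The evaluation function `P ↦ ⟨x, P μ⟩` on `Γ`. -/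
noncomputable def evF (φ : Ω → Ω) (x : C(Ω, ℝ)) (μ : SignedMeasure Ω) : C(GammaSG φ, ℝ) :=
  ⟨fun P => spair (⇑x) (P.1 μ), (continuous_ev x μ).comp continuous_subtype_val⟩

lemma mapsTo_GammaSG (φ : Ω → Ω) (hφ : Continuous φ) :
    Set.MapsTo (fun T => Vop φ ∘ T) (GammaSG φ) (GammaSG φ) := by
  refine Set.MapsTo.closure ?_ (continuous_comp_Vop φ hφ)
  rintro _ ⟨n, rfl⟩
  exact ⟨n + 1, Function.iterate_succ' _ _⟩

/-- The left translation by `V` on `Γ`. -/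
noncomputable def shiftG (φ : Ω → Ω) (hφ : Continuous φ) : C(GammaSG φ, GammaSG φ) :=
  ⟨(mapsTo_GammaSG φ hφ).restrict, (continuous_comp_Vop φ hφ).restrict _⟩

/-- Evaluation at a point as a functional. -/
def evalL {K : Type*} [TopologicalSpace K] (p : K) : C(K, ℝ) →ₗ[ℝ] ℝ where
  toFun f := f p
  map_add' _ _ := rfl
  map_smul' _ _ := rfl

lemma exists_rep (φ : Ω → Ω) (hφ : Continuous φ) (Q : SignedMeasure Ω → SignedMeasure Ω)
    (hQ : Q ∈ GSG φ) : ∃ L : C(GammaSG φ, ℝ) →ₗ[ℝ] ℝ, IsState L ∧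
      ∀ x μ, L (evF φ x μ) = spair (⇑x) (Q μ) := by
  have : CompactSpace (GammaSG φ) := isCompact_iff_compactSpace.1 (isCompact_GammaSG φ hφ)
  have hV : ∀ n : ℕ, (Vop φ)^[n] ∈ GammaSG φ := fun n => subset_closure ⟨n, rfl⟩
  have hconv : convexHull ℝ (Set.range fun n : ℕ => (Vop φ)^[n]) ⊆
      {T | ∃ L : C(GammaSG φ, ℝ) →ₗ[ℝ] ℝ, IsState L ∧
        ∀ x μ, L (evF φ x μ) = spair (⇑x) (T μ)} := by
    apply convexHull_min
    · rintro _ ⟨n, rfl⟩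
      exact ⟨evalL ⟨_, hV n⟩, ⟨fun f hf => hf _, rfl⟩, fun x μ => rfl⟩
    · rintro S ⟨L, hL, hLS⟩ T ⟨M, hM, hMT⟩ a b ha hb hab
      refine ⟨a • L + b • M, ⟨fun f hf => ?_, ?_⟩, fun x μ => ?_⟩
      · exact add_nonneg (mul_nonneg ha (hL.1 f hf)) (mul_nonneg hb (hM.1 f hf))
      · simp [hL.2, hM.2, hab]
      · simp only [LinearMap.add_apply, LinearMap.smul_apply, hLS, hMT, Pi.add_apply, Pi.smul_apply,
          smul_eq_mul]
        rw [spair_add, spair_smul _ _ _ ha, spair_smul _ _ _ hb]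
  obtain ⟨U, hU, hUQ⟩ := mem_closure_iff_ultrafilter.1 hQ
  have hex : ∀ T : SignedMeasure Ω → SignedMeasure Ω, ∃ L : C(GammaSG φ, ℝ) →ₗ[ℝ] ℝ, IsState L ∧
      (T ∈ convexHull ℝ (Set.range fun n : ℕ => (Vop φ)^[n]) →
        ∀ x μ, L (evF φ x μ) = spair (⇑x) (T μ)) := by
    intro T
    by_cases hT : T ∈ convexHull ℝ (Set.range fun n : ℕ => (Vop φ)^[n])
    · obtain ⟨L, hL, h⟩ := hconv hT
      exact ⟨L, hL, fun _ => h⟩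
    · exact ⟨evalL ⟨_, hV 0⟩, ⟨fun f hf => hf _, rfl⟩, fun h => absurd h hT⟩
  choose L hL hLT using hex
  obtain ⟨M, hM, hlim⟩ := exists_state_lim U L hL
  refine ⟨M, hM, fun x μ => tendsto_nhds_unique (hlim _) ?_⟩
  have h1 : Tendsto (fun T : SignedMeasure Ω → SignedMeasure Ω => spair (⇑x) (T μ)) U
      (𝓝 (spair (⇑x) (Q μ))) := ((continuous_ev x μ).tendsto Q).mono_left hUQ
  refine h1.congr' ?_
  filter_upwards [hU] with T hT
  exact (hLT T hT x μ).symm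

lemma part_one (φ : Ω → Ω) (hφ : Continuous φ)
    (lam : Measure (SignedMeasure Ω → SignedMeasure Ω))
    (hinv : lam.map (fun T => Vop φ ∘ T) = lam)
    (T : SignedMeasure Ω → SignedMeasure Ω) (hT : Represents lam T) : Vop φ ∘ T = T := by
  funext μ
  apply spair_ext
  intro x
  rw [Function.comp_apply, spair_Vop φ hφ, hT, hT]
  conv_rhs => rw [← hinv]
  rw [integral_map (continuous_comp_Vop φ hφ).measurable.aemeasurable
    (continuous_ev x μ).measurable.aestronglyMeasurable]
  simp only [Function.comp_apply, spair_Vop φ hφ]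

lemma part_two (φ : Ω → Ω) (hφ : Continuous φ) (Q : SignedMeasure Ω → SignedMeasure Ω)
    (hQ : Q ∈ Lker φ) : ∃ lam : Measure (SignedMeasure Ω → SignedMeasure Ω),
      IsProbabilityMeasure lam ∧ lam (GammaSG φ)ᶜ = 0 ∧
      lam.map (fun T => Vop φ ∘ T) = lam ∧ Represents lam Q := by
  have : CompactSpace (GammaSG φ) := isCompact_iff_compactSpace.1 (isCompact_GammaSG φ hφ)
  obtain ⟨L, hL, hLQ⟩ := exists_rep φ hφ Q hQ.1
  obtain ⟨m, hm, hinv, hrep⟩ := exists_invariant_measure (shiftG φ hφ) L hL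
  have hval : Measurable (Subtype.val : GammaSG φ → _) := measurable_subtype_coe
  have hV := (continuous_comp_Vop φ hφ).measurable
  refine ⟨m.map Subtype.val, Measure.isProbabilityMeasure_map hval.aemeasurable, ?_, ?_, ?_⟩
  · have hc : IsClosed (GammaSG φ) := isClosed_closure
    rw [Measure.map_apply hval hc.measurableSet.compl]
    simp
  · rw [Measure.map_map hV hval]
    conv_rhs => rw [← hinv]
    rw [Measure.map_map hval (shiftG φ hφ).continuous.measurable]
    rfl
  · have hk : ∀ k x μ, iterL (shiftG φ hφ) L k (evF φ x μ) = spair (⇑x) (Q μ) := by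
      intro k
      induction k with
      | zero => exact hLQ
      | succ k ih =>
        intro x μ
        have e : compLin (shiftG φ hφ) (evF φ x μ) = evF φ (x.comp ⟨φ, hφ⟩) μ := by
          ext P
          exact spair_Vop φ hφ x (P.1 μ)
        rw [iterL, LinearMap.comp_apply, e, ih, ← spair_Vop φ hφ]
        exact congrArg _ (congrFun hQ.2 μ)
    intro x μ
    rw [integral_map hval.aemeasurable (continuous_ev x μ).measurable.aestronglyMeasurable]
    rw [← hLQ]
    exact (hrep (evF φ x μ) (fun k => by rw [hk, hLQ])).symm

end Main

variable {Ω : Type*} [TopologicalSpace Ω] [CompactSpace Ω] [TopologicalSpace.MetrizableSpace Ω]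
  [Nonempty Ω] [MeasurableSpace Ω] [BorelSpace Ω]

/-- Lemma 1.8: (i) if `λ` is a Borel probability measure on `Γ(Ω,φ)` invariant under
`P ↦ V ∘ P` and `T` is represented by `λ`, then `V ∘ T = T`; in particular `T ∈ G(Ω,φ)`
implies `T ∈ L`. (ii) Conversely, every `Q ∈ L` is represented by some such invariant
probability measure on `Γ(Ω,φ)`. -/
theorem stmt_4 (φ : Ω → Ω) (hφ : Continuous φ) :
    (∀ lam : Measure (SignedMeasure Ω → SignedMeasure Ω), IsProbabilityMeasure lam →
      lam (GammaSG φ)ᶜ = 0 →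
      lam.map (fun T => Vop φ ∘ T) = lam →
      ∀ T : SignedMeasure Ω → SignedMeasure Ω, Represents lam T →
        Vop φ ∘ T = T ∧ (T ∈ GSG φ → T ∈ Lker φ)) ∧
    (∀ Q ∈ Lker φ, ∃ lam : Measure (SignedMeasure Ω → SignedMeasure Ω),
      IsProbabilityMeasure lam ∧ lam (GammaSG φ)ᶜ = 0 ∧
      lam.map (fun T => Vop φ ∘ T) = lam ∧ Represents lam Q) := by
  refine ⟨fun lam _ _ hinv T hT => ?_, fun Q hQ => part_two φ hφ Q hQ⟩
  have h := part_one φ hφ lam hinv T hT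
  exact ⟨h, fun hG => ⟨hG, h⟩⟩
end

section
/- If E(Ω,φ) = E_1(Ω,φ) (which holds in particular whenever the semicascade (Ω,φ) is tame), then the closure of the union of all minimal sets of (Ω,φ) equals the closure of the union of the supports of all φ-ergodic Borel probability measures (the minimal attraction center). -/
open MeasureTheory Filter Topology

section Helpers

/-- Existence of minimal sets inside a nonempty closed invariant set. -/
theorem aux_exists_minimal {X : Type*} [TopologicalSpace X] [CompactSpace X]
    (T : X → X) (K : Set X) (hK : K.Nonempty) (hKc : IsClosed K) (hKT : Set.MapsTo T K K) :
    ∃ m ⊆ K, IsMinimalSet T m := by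
  obtain ⟨m, hmK, hm⟩ := zorn_superset_nonempty
    {s : Set X | s.Nonempty ∧ IsClosed s ∧ Set.MapsTo T s s} (by
      intro c hc hchain hne
      refine ⟨⋂₀ c, ⟨?_, ?_, ?_⟩, fun s hs => Set.sInter_subset_of_mem hs⟩
      · have : Nonempty c := hne.to_subtype
        exact IsCompact.nonempty_sInter_of_directed_nonempty_isCompact_isClosed
          (by
            intro a ha b hb
            rcases hchain.total ha hb with h | h
            · exact ⟨a, ha, subset_rfl, h⟩
            · exact ⟨b, hb, h, subset_rfl⟩)
          (fun s hs => (hc hs).1) (fun s hs => (hc hs).2.1.isCompact) (fun s hs => (hc hs).2.1)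
      · exact isClosed_sInter fun s hs => (hc hs).2.1
      · intro x hx s hs
        exact (hc hs).2.2 (hx s hs)) K ⟨hK, hKc, hKT⟩
  refine ⟨m, hmK, hm.prop.1, hm.prop.2.1, hm.prop.2.2, ?_⟩
  intro m' hm' h1 h2 h3
  exact subset_antisymm hm' (hm.le_of_le ⟨h1, h2, h3⟩ hm')

/-- Some element of the Ellis semigroup sends every point into a minimal set. -/
theorem aux_exists_p {Ω : Type*} [TopologicalSpace Ω] [CompactSpace Ω] [T2Space Ω]
    (φ : Ω → Ω) (hφ : Continuous φ) :
    ∃ p ∈ EllisE φ, ∀ ω, ∃ m, IsMinimalSet φ m ∧ p ω ∈ m := by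
  have hT : Continuous (fun g : Ω → Ω => φ ∘ g) :=
    continuous_pi fun ω => hφ.comp (continuous_apply ω)
  obtain ⟨I, hIE, ⟨p, hp⟩, hIc, hIT, hImin⟩ := aux_exists_minimal (fun g : Ω → Ω => φ ∘ g) (EllisE φ)
    ⟨φ^[0], subset_closure ⟨0, rfl⟩⟩ isClosed_closure (by
      refine Set.MapsTo.closure ?_ hT
      rintro _ ⟨n, rfl⟩
      exact ⟨n + 1, Function.iterate_succ' φ n⟩)
  refine ⟨p, hIE hp, fun ω => ⟨(fun g : Ω → Ω => g ω) '' I, ⟨⟨_, p, hp, rfl⟩, ?_, ?_, ?_⟩, ⟨p, hp, rfl⟩⟩⟩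
  · exact (hIc.isCompact.image (continuous_apply ω)).isClosed
  · rintro _ ⟨g, hg, rfl⟩
    exact ⟨_, hIT hg, rfl⟩
  · intro m' hm' ⟨y, hy⟩ hc hinv
    obtain ⟨g, hg, rfl⟩ := hm' hy
    have := hImin (I ∩ (fun g : Ω → Ω => g ω) ⁻¹' m') Set.inter_subset_left ⟨g, hg, hy⟩
      (hIc.inter (hc.preimage (continuous_apply ω))) (by
        rintro q ⟨hq, hq'⟩
        exact ⟨hIT hq, hinv hq'⟩)
    refine subset_antisymm hm' ?_
    rintro _ ⟨q, hq, rfl⟩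
    rw [← this] at hq
    exact hq.2

/-- A continuous nonnegative function with a prescribed closed zero set. -/
theorem aux_exists_fun {Ω : Type*} [TopologicalSpace Ω] [TopologicalSpace.MetrizableSpace Ω]
    (M : Set Ω) (hM : IsClosed M) (hne : M.Nonempty) :
    ∃ g : C(Ω, ℝ), (∀ x, 0 ≤ g x) ∧ ∀ x, g x = 0 ↔ x ∈ M := by
  letI := TopologicalSpace.metrizableSpaceMetric Ω
  refine ⟨⟨fun x => Metric.infDist x M, Metric.continuous_infDist_pt M⟩,
    fun x => Metric.infDist_nonneg, fun x => ?_⟩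
  exact (hM.mem_iff_infDist_zero hne).symm

theorem aux_integrable {Ω : Type*} [TopologicalSpace Ω] [CompactSpace Ω]
    [MeasurableSpace Ω] [BorelSpace Ω] (μ : Measure Ω) [IsFiniteMeasure μ] (f : C(Ω, ℝ)) :
    Integrable f μ := (BoundedContinuousFunction.mkOfCompact f).integrable μ

theorem aux_null_iff {Ω : Type*} [TopologicalSpace Ω] [CompactSpace Ω]
    [MeasurableSpace Ω] [BorelSpace Ω] (μ : Measure Ω) [IsFiniteMeasure μ] (M : Set Ω)
    (g : C(Ω, ℝ)) (hg : ∀ x, 0 ≤ g x) (hgM : ∀ x, g x = 0 ↔ x ∈ M) :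
    ∫ x, g x ∂μ = 0 ↔ μ Mᶜ = 0 := by
  rw [integral_eq_zero_iff_of_nonneg hg (aux_integrable μ g)]
  rw [Filter.EventuallyEq, ae_iff]
  have : {a | ¬ g a = (0 : Ω → ℝ) a} = Mᶜ := by
    ext x; simp [hgM]
  rw [this]

theorem aux_supp_sub {Ω : Type*} [TopologicalSpace Ω] [CompactSpace Ω]
    [TopologicalSpace.MetrizableSpace Ω] [MeasurableSpace Ω] [BorelSpace Ω]
    (φ : Ω → Ω) (hφ : Continuous φ) (h : EllisE φ = E1SG φ) (μ : Measure Ω)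
    [IsProbabilityMeasure μ] (hμ : ∀ e : Set Ω, MeasurableSet e → μ (φ ⁻¹' e) = μ e) :
    msupp μ ⊆ closure (⋃₀ {m : Set Ω | IsMinimalSet φ m}) := by
  obtain ⟨p, hpE, hp⟩ := aux_exists_p φ hφ
  set M := closure (⋃₀ {m : Set Ω | IsMinimalSet φ m}) with hM
  have hpM : ∀ ω, p ω ∈ M := fun ω => by
    obtain ⟨m, hm, hpm⟩ := hp ω
    exact subset_closure ⟨m, hm, hpm⟩
  obtain ⟨ω₀⟩ : Nonempty Ω := nonempty_of_isProbabilityMeasure μ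
  obtain ⟨g, hg, hgM⟩ := aux_exists_fun M isClosed_closure ⟨_, hpM ω₀⟩
  rw [h] at hpE
  obtain ⟨n, hn⟩ := hpE
  have hmp : MeasurePreserving φ μ μ := ⟨hφ.measurable, by
    ext e he; rw [Measure.map_apply hφ.measurable he, hμ e he]⟩
  have hInt : ∀ k, ∫ x, g (φ^[n k] x) ∂μ = ∫ x, g x ∂μ := fun k => by
    have h1 := hmp.iterate (n k)
    conv_rhs => rw [← h1.map_eq]
    rw [integral_map h1.measurable.aemeasurable g.continuous.aestronglyMeasurable]
  have hlim : Tendsto (fun k => ∫ x, g (φ^[n k] x) ∂μ) atTop (𝓝 (∫ x, g (p x) ∂μ)) := by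
    refine tendsto_integral_of_dominated_convergence (fun _ => ‖g‖) ?_ (integrable_const _) ?_ ?_
    · intro k
      exact (g.continuous.comp (hφ.iterate (n k))).aestronglyMeasurable
    · intro k
      exact ae_of_all _ fun x => g.norm_coe_le_norm _
    · exact ae_of_all _ fun x => (g.continuous.tendsto _).comp (hn x)
  have h0 : ∫ x, g (p x) ∂μ = 0 := by
    have : ∀ x, g (p x) = 0 := fun x => (hgM _).2 (hpM x)
    simp [this]
  simp only [hInt, h0] at hlim
  have := tendsto_nhds_unique hlim tendsto_const_nhds
  exact Set.sInter_subset_of_mem ⟨isClosed_closure, (aux_null_iff μ M g hg hgM).1 this.symm⟩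

theorem aux_msupp {Ω : Type*} [TopologicalSpace Ω] [CompactSpace Ω]
    [TopologicalSpace.MetrizableSpace Ω] [MeasurableSpace Ω] [BorelSpace Ω]
    (φ : Ω → Ω) (hφ : Continuous φ) (m : Set Ω) (hm : IsMinimalSet φ m) (μ : Measure Ω)
    [IsProbabilityMeasure μ] (hμ : ∀ e : Set Ω, MeasurableSet e → μ (φ ⁻¹' e) = μ e)
    (hμm : μ mᶜ = 0) : m = msupp μ := by
  letI := TopologicalSpace.metrizableSpaceMetric Ω
  have hs : msupp μ = μ.support := Measure.support_eq_sInter.symm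
  have hfull : μ (msupp μ)ᶜ = 0 := by rw [hs]; exact Measure.measure_compl_support
  have hc : IsClosed (msupp μ) := by rw [hs]; exact Measure.isClosed_support
  refine (hm.2.2.2 (msupp μ) (Set.sInter_subset_of_mem ⟨hm.2.1, hμm⟩) ?_ hc ?_).symm
  · rw [hs]; exact Measure.nonempty_support (IsProbabilityMeasure.ne_zero μ)
  · have h0 : μ (φ ⁻¹' (msupp μ))ᶜ = 0 := by
      rw [← Set.preimage_compl, hμ _ hc.measurableSet.compl, hfull]
    have hsub : msupp μ ⊆ φ ⁻¹' (msupp μ) := Set.sInter_subset_of_mem ⟨hc.preimage hφ, h0⟩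
    exact hsub

/-- Functionals given by integration against a probability measure concentrated on `m`. -/
def auxP {Ω : Type*} [TopologicalSpace Ω] [MeasurableSpace Ω] (m : Set Ω) :
    Set (C(Ω, ℝ) → ℝ) :=
  {L | ∃ μ : Measure Ω, IsProbabilityMeasure μ ∧ μ mᶜ = 0 ∧ L = fun f => ∫ x, f x ∂μ}

theorem auxP_compact {Ω : Type*} [TopologicalSpace Ω] [CompactSpace Ω]
    [TopologicalSpace.MetrizableSpace Ω] [MeasurableSpace Ω] [BorelSpace Ω] (m : Set Ω)
    (hm : IsClosed m) (hne : m.Nonempty) : IsCompact (auxP m) := by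
  letI := TopologicalSpace.metrizableSpaceMetric Ω
  obtain ⟨g, hg, hgM⟩ := aux_exists_fun m hm hne
  have hcont : ∀ f : C(Ω, ℝ), Continuous fun ν : ProbabilityMeasure Ω => ∫ x, f x ∂(ν : Measure Ω) :=
    fun f => by
      rw [continuous_iff_continuousAt]
      intro ν
      exact (ProbabilityMeasure.tendsto_iff_forall_integral_tendsto.1 tendsto_id)
        (BoundedContinuousFunction.mkOfCompact f)
  have hcl : IsClosed {ν : ProbabilityMeasure Ω | ∫ x, g x ∂(ν : Measure Ω) = 0} :=
    isClosed_eq (hcont g) continuous_const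
  have := hcl.isCompact.image (continuous_pi hcont)
  convert this using 1
  ext L
  constructor
  · rintro ⟨μ, h1, h2, rfl⟩
    exact ⟨⟨μ, h1⟩, (aux_null_iff μ m g hg hgM).2 h2, rfl⟩
  · rintro ⟨ν, h1, rfl⟩
    exact ⟨ν, inferInstance, (aux_null_iff _ m g hg hgM).1 h1, rfl⟩

theorem auxP_convex {Ω : Type*} [TopologicalSpace Ω] [CompactSpace Ω]
    [MeasurableSpace Ω] [BorelSpace Ω] (m : Set Ω) : Convex ℝ (auxP m) := by
  rintro _ ⟨μ, hμ, hμm, rfl⟩ _ ⟨ν, hν, hνm, rfl⟩ a b ha hb hab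
  refine ⟨ENNReal.ofReal a • μ + ENNReal.ofReal b • ν, ⟨?_⟩, ?_, ?_⟩
  · simp [← ENNReal.ofReal_add ha hb, hab]
  · simp [hμm, hνm]
  · ext f
    have h1 := (aux_integrable μ f).smul_measure (c := ENNReal.ofReal a) ENNReal.ofReal_ne_top
    have h2 := (aux_integrable ν f).smul_measure (c := ENNReal.ofReal b) ENNReal.ofReal_ne_top
    rw [integral_add_measure h1 h2]
    simp [integral_smul_measure, ENNReal.toReal_ofReal, ha, hb]

/-- Invariant functionals. -/
def auxS {Ω : Type*} [TopologicalSpace Ω] [MeasurableSpace Ω] (φ : C(Ω, Ω)) (m : Set Ω) :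
    Set (C(Ω, ℝ) → ℝ) :=
  auxP m ∩ {L | ∀ f : C(Ω, ℝ), L (f.comp φ) = L f}

theorem auxS_compact {Ω : Type*} [TopologicalSpace Ω] [CompactSpace Ω]
    [TopologicalSpace.MetrizableSpace Ω] [MeasurableSpace Ω] [BorelSpace Ω] (φ : C(Ω, Ω))
    (m : Set Ω) (hm : IsClosed m) (hne : m.Nonempty) : IsCompact (auxS φ m) := by
  refine (auxP_compact m hm hne).inter_right ?_
  simp only [Set.ofPred_forall]
  exact isClosed_iInter fun f => isClosed_eq (continuous_apply _) (continuous_apply _)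

theorem auxS_nonempty {Ω : Type*} [TopologicalSpace Ω] [CompactSpace Ω]
    [TopologicalSpace.MetrizableSpace Ω] [MeasurableSpace Ω] [BorelSpace Ω] (φ : C(Ω, Ω))
    (m : Set Ω) (hm : IsClosed m) (hne : m.Nonempty) (hinv : Set.MapsTo φ m m) :
    (auxS φ m).Nonempty := by
  obtain ⟨x, hx⟩ := hne
  have hit : ∀ k, φ^[k] x ∈ m := fun k => hinv.iterate k hx
  have hmem : ∀ N : ℕ, (fun f : C(Ω, ℝ) => birkhoffAverage ℝ φ f (N + 1) x) ∈ auxP m := by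
    intro N
    have : (fun f : C(Ω, ℝ) => birkhoffAverage ℝ φ f (N + 1) x) =
        ∑ k ∈ Finset.range (N + 1), ((N + 1 : ℕ) : ℝ)⁻¹ • (fun f : C(Ω, ℝ) => f (φ^[k] x)) := by
      ext f
      simp [birkhoffAverage, birkhoffSum, Finset.mul_sum]
    rw [this]
    refine (auxP_convex m).sum_mem (fun _ _ => by positivity) ?_ ?_
    · simp; field_simp
    · intro k _
      refine ⟨Measure.dirac (φ^[k] x), inferInstance, ?_, ?_⟩
      · rw [Measure.dirac_apply' _ hm.measurableSet.compl]
        simp [hit k]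
      · ext f
        rw [integral_dirac]
  obtain ⟨L, hL, hlim⟩ := (auxP_compact m hm ⟨x, hx⟩).ultrafilter_le_nhds
    ((hyperfilter ℕ).map fun N => (fun f : C(Ω, ℝ) => birkhoffAverage ℝ φ f (N + 1) x))
    (by
      rw [Filter.le_principal_iff]
      exact Filter.mem_map.2 (Filter.univ_mem' hmem))
  have hlim' : ∀ f : C(Ω, ℝ),
      Tendsto (fun N => birkhoffAverage ℝ φ f (N + 1) x) (hyperfilter ℕ) (𝓝 (L f)) := fun f =>
    (tendsto_pi_nhds.1 (show Tendsto _ (hyperfilter ℕ : Filter ℕ) (𝓝 L) from hlim)) f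
  refine ⟨L, hL, fun f => ?_⟩
  have h1 := (hlim' (f.comp φ)).sub (hlim' f)
  have h2 : Tendsto (fun N => birkhoffAverage ℝ φ f (N + 1) (φ x) -
      birkhoffAverage ℝ φ f (N + 1) x) (hyperfilter ℕ) (𝓝 0) := by
    have h3 := tendsto_birkhoffAverage_apply_sub_birkhoffAverage (𝕜 := ℝ) (f := φ) (g := f) (x := x)
      ((isCompact_range f.continuous).isBounded.subset (by
        rintro _ ⟨k, rfl⟩; exact ⟨_, rfl⟩))
    exact (h3.comp (tendsto_add_atTop_nat 1)).mono_left Nat.hyperfilter_le_atTop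
  have h4 : ∀ N, birkhoffAverage ℝ φ (f.comp φ) (N + 1) x =
      birkhoffAverage ℝ φ f (N + 1) (φ x) := fun N => by
    simp only [birkhoffAverage, birkhoffSum, ContinuousMap.comp_apply]
    congr 1
    refine Finset.sum_congr rfl fun k _ => ?_
    rw [← Function.iterate_succ_apply' φ, Function.iterate_succ_apply]
  simp only [h4] at h1
  exact sub_eq_zero.1 (tendsto_nhds_unique h1 h2)

theorem aux_ext {Ω : Type*} [TopologicalSpace Ω] [CompactSpace Ω]
    [TopologicalSpace.MetrizableSpace Ω] [MeasurableSpace Ω] [BorelSpace Ω]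
    (μ ν : Measure Ω) [IsFiniteMeasure μ] [IsFiniteMeasure ν]
    (h : ∀ f : C(Ω, ℝ), ∫ x, f x ∂μ = ∫ x, f x ∂ν) : μ = ν := by
  letI := TopologicalSpace.metrizableSpaceMetric Ω
  exact ext_of_forall_integral_eq_of_IsFiniteMeasure fun f => h f.toContinuousMap

theorem auxS_mem {Ω : Type*} [TopologicalSpace Ω] [CompactSpace Ω]
    [MeasurableSpace Ω] [BorelSpace Ω] (φ : C(Ω, Ω)) (m : Set Ω) (μ : Measure Ω)
    [hp : IsProbabilityMeasure μ] (h0 : μ mᶜ = 0)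
    (hμ : ∀ e : Set Ω, MeasurableSet e → μ (φ ⁻¹' e) = μ e) :
    (fun f : C(Ω, ℝ) => ∫ x, f x ∂μ) ∈ auxS φ m := by
  refine ⟨⟨μ, hp, h0, rfl⟩, fun f => ?_⟩
  have : μ.map φ = μ := by
    ext e he; rw [Measure.map_apply φ.continuous.measurable he, hμ e he]
  change ∫ x, f (φ x) ∂μ = ∫ x, f x ∂μ
  conv_rhs => rw [← this]
  rw [integral_map φ.continuous.measurable.aemeasurable f.continuous.aestronglyMeasurable]

theorem aux_cond {Ω : Type*} [TopologicalSpace Ω] [CompactSpace Ω]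
    [MeasurableSpace Ω] [BorelSpace Ω] (φ : C(Ω, Ω)) (m : Set Ω) (μ : Measure Ω)
    [hp : IsProbabilityMeasure μ] (h0 : μ mᶜ = 0)
    (hμ : ∀ e : Set Ω, MeasurableSet e → μ (φ ⁻¹' e) = μ e)
    (e : Set Ω) (he : MeasurableSet e) (hinv : φ ⁻¹' e = e) (hpos : μ e ≠ 0) :
    (fun f : C(Ω, ℝ) => ∫ x, f x ∂(ProbabilityTheory.cond μ e)) ∈ auxS φ m := by
  have := ProbabilityTheory.cond_isProbabilityMeasure hpos
  refine auxS_mem φ m _ (ProbabilityTheory.cond_absolutelyContinuous h0) fun s hs => ?_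
  rw [ProbabilityTheory.cond_apply he, ProbabilityTheory.cond_apply he, ← hμ (e ∩ s) (he.inter hs),
    Set.preimage_inter, hinv]

theorem aux_exists_ergodic {Ω : Type*} [TopologicalSpace Ω] [CompactSpace Ω]
    [TopologicalSpace.MetrizableSpace Ω] [MeasurableSpace Ω] [BorelSpace Ω] (φ : C(Ω, Ω))
    (m : Set Ω) (hm : IsClosed m) (hne : m.Nonempty) (hinv : Set.MapsTo φ m m) :
    ∃ μ : Measure Ω, IsErgodicMeasure φ μ ∧ μ mᶜ = 0 := by
  obtain ⟨L, hL⟩ := (auxS_compact φ m hm hne).extremePoints_nonempty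
    (auxS_nonempty φ m hm hne hinv)
  obtain ⟨⟨⟨μ, hp, h0, hLμ⟩, hLinv⟩, hext⟩ := hL
  have hmap : μ.map φ = μ := by
    have := Measure.isProbabilityMeasure_map (μ := μ) φ.continuous.measurable.aemeasurable
    refine aux_ext _ _ fun f => ?_
    rw [integral_map φ.continuous.measurable.aemeasurable f.continuous.aestronglyMeasurable]
    have := hLinv f
    rw [hLμ] at this
    exact this
  have hμ : ∀ e : Set Ω, MeasurableSet e → μ (φ ⁻¹' e) = μ e := fun e he => by
    conv_rhs => rw [← hmap]
    rw [Measure.map_apply φ.continuous.measurable he]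
  refine ⟨μ, ⟨hp, hμ, fun e he hei => ?_⟩, h0⟩
  by_contra! hcon
  obtain ⟨he0, he1⟩ := hcon
  have hc0 : μ eᶜ ≠ 0 := fun hc => he1 ((prob_compl_eq_zero_iff he).1 hc)
  have m1 := aux_cond φ m μ h0 hμ e he hei he0
  have m2 := aux_cond φ m μ h0 hμ eᶜ he.compl (by rw [Set.preimage_compl, hei]) hc0
  have := ProbabilityTheory.cond_isProbabilityMeasure he0
  have key := hext m1 m2 (by
    refine ⟨μ.real e, μ.real eᶜ, ?_, ?_, ?_, ?_⟩
    · exact ENNReal.toReal_pos he0 (measure_ne_top _ _)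
    · exact ENNReal.toReal_pos hc0 (measure_ne_top _ _)
    · exact probReal_add_probReal_compl he
    · rw [hLμ]
      ext f
      have r1 : (μ e).toReal ≠ 0 := (ENNReal.toReal_pos he0 (measure_ne_top _ _)).ne'
      have r2 : (μ eᶜ).toReal ≠ 0 := (ENNReal.toReal_pos hc0 (measure_ne_top _ _)).ne'
      simp only [ProbabilityTheory.cond, integral_smul_measure, Pi.add_apply, Pi.smul_apply,
        smul_eq_mul, ENNReal.toReal_inv, Measure.real]
      rw [mul_inv_cancel_left₀ r1, mul_inv_cancel_left₀ r2]
      exact integral_add_compl he (aux_integrable μ f))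
  have hEq : ProbabilityTheory.cond μ e = μ := by
    refine aux_ext _ _ fun f => ?_
    have := congrFun (key.trans hLμ) f
    exact this
  have h1 : ProbabilityTheory.cond μ e eᶜ = 0 := by
    rw [ProbabilityTheory.cond_apply he]; simp
  rw [hEq] at h1
  exact hc0 h1

end Helpers

variable {Ω : Type*} [TopologicalSpace Ω] [CompactSpace Ω] [TopologicalSpace.MetrizableSpace Ω]
  [Nonempty Ω] [MeasurableSpace Ω] [BorelSpace Ω]

/-- Proposition 3.4: if `E(Ω,φ) = E₁(Ω,φ)` (in particular, if the semicascade is tame),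
then the closure of the union of all minimal sets equals the closure of the union of the
supports of all `φ`-ergodic Borel probability measures (the minimal attraction center). -/
theorem stmt_14 (φ : Ω → Ω) (hφ : Continuous φ) (h : EllisE φ = E1SG φ) :
    closure (⋃₀ {m : Set Ω | IsMinimalSet φ m}) =
      closure (⋃₀ {s : Set Ω | ∃ μ : Measure Ω, IsErgodicMeasure φ μ ∧ s = msupp μ}) := by
  apply subset_antisymm
  · refine closure_mono ?_
    rintro x ⟨m, hm, hx⟩
    obtain ⟨μ, hμ, h0⟩ := aux_exists_ergodic ⟨φ, hφ⟩ m hm.2.1 hm.1 hm.2.2.1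
    have := hμ.1
    exact ⟨m, ⟨μ, hμ, aux_msupp φ hφ m hm μ hμ.2.1 h0⟩, hx⟩
  · refine closure_minimal ?_ isClosed_closure
    rintro x ⟨_, ⟨μ, hμ, rfl⟩, hx⟩
    have := hμ.1
    exact aux_supp_sub φ hφ h μ hμ.2.1 hx
end
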